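/- The iterated integral ∫₀^{1/4} ∫₀^{√3·x₁} (4/√3)·((x₁ − 7/24)² + (x₂ − 7/(24√3))²) dx₂ dx₁ + ∫_{1/4}^{1/2} ∫₀^{(1−x₁)/√3} (4/√3)·((x₁ − 7/24)² + (x₂ − 7/(24√3))²) dx₂ dx₁ equals 11/1296; i.e., the contribution of the Voronoi region of the point (7/24, 7/(24√3)) to the three-means distortion is 11/1296. -/

import Mathlib

lemma inner_aux (c b u k : ℝ) :
    (∫ x₂ in (0:ℝ)..u, k * (c ^ 2 + (x₂ - b) ^ 2)) =
      k * (c ^ 2 * u + ((u - b) ^ 3 + b ^ 3) / 3) := by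
  rw [intervalIntegral.integral_eq_sub_of_hasDerivAt
    (f := fun x => k * (c ^ 2 * x + ((x - b) ^ 3 + b ^ 3) / 3))]
  · ring
  · intro x _
    have h := (((hasDerivAt_id x).const_mul (c ^ 2)).add
      (((((hasDerivAt_id x).sub_const b).pow 3).add_const (b ^ 3)).div_const 3)).const_mul k
    refine HasDerivAt.congr_deriv h ?_
    simp
  · exact (by fun_prop : Continuous _).intervalIntegrable _ _

lemma poly_aux (p q A B C D : ℝ) :
    (∫ x in p..q, (A * x ^ 3 + B * x ^ 2 + C * x + D)) =
      (A * q ^ 4 / 4 + B * q ^ 3 / 3 + C * q ^ 2 / 2 + D * q) -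
      (A * p ^ 4 / 4 + B * p ^ 3 / 3 + C * p ^ 2 / 2 + D * p) := by
  rw [intervalIntegral.integral_eq_sub_of_hasDerivAt
    (f := fun x => A * x ^ 4 / 4 + B * x ^ 3 / 3 + C * x ^ 2 / 2 + D * x)]
  · intro x _
    have h := ((((((hasDerivAt_id x).pow 4).const_mul A).div_const 4).add
      ((((hasDerivAt_id x).pow 3).const_mul B).div_const 3)).add
      ((((hasDerivAt_id x).pow 2).const_mul C).div_const 2)).add
      ((hasDerivAt_id x).const_mul D)
    refine HasDerivAt.congr_deriv h ?_
    simp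
    ring
  · exact (by fun_prop : Continuous _).intervalIntegrable _ _


theorem voronoi_region_integral :
    (∫ x₁ in (0:ℝ)..(1/4), ∫ x₂ in (0:ℝ)..(Real.sqrt 3 * x₁),
        (4 / Real.sqrt 3) * ((x₁ - 7/24) ^ 2 + (x₂ - 7 / (24 * Real.sqrt 3)) ^ 2)) +
    (∫ x₁ in (1/4:ℝ)..(1/2), ∫ x₂ in (0:ℝ)..((1 - x₁) / Real.sqrt 3),
        (4 / Real.sqrt 3) * ((x₁ - 7/24) ^ 2 + (x₂ - 7 / (24 * Real.sqrt 3)) ^ 2)) =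
    11 / 1296 := by

  have hs : Real.sqrt 3 ≠ 0 := by positivity
  have h2 : Real.sqrt 3 ^ 2 = 3 := Real.sq_sqrt (by norm_num)
  have e (v : ℝ) (c : ℝ) : (4 / Real.sqrt 3) * (c ^ 2 * (v / Real.sqrt 3) +
      ((v / Real.sqrt 3 - 7 / (24 * Real.sqrt 3)) ^ 3 + (7 / (24 * Real.sqrt 3)) ^ 3) / 3) =
      4 / 3 * (c ^ 2 * v + ((v - 7 / 24) ^ 3 + (7 / 24) ^ 3) / 9) := by
    have hi : (Real.sqrt 3)⁻¹ ^ 2 = 1 / 3 := by rw [inv_pow, h2]; norm_num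
    have h4 : (Real.sqrt 3)⁻¹ ^ 4 = 1 / 9 := by
      rw [show (Real.sqrt 3)⁻¹ ^ 4 = ((Real.sqrt 3)⁻¹ ^ 2) ^ 2 by ring, hi]; norm_num
    simp only [div_eq_mul_inv, mul_inv]
    ring_nf
    simp only [hi, h4]
    ring
  have hv (x : ℝ) : Real.sqrt 3 * x = 3 * x / Real.sqrt 3 := by
    field_simp
    rw [h2]; ring
  have f1 (x : ℝ) :
      4 / 3 * ((x - 7/24) ^ 2 * (3 * x) + ((3 * x - 7 / 24) ^ 3 + (7 / 24) ^ 3) / 9)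
      = 8 * x ^ 3 + (-7/2) * x ^ 2 + (49/108) * x + 0 := by
    ring
  have f2 (x : ℝ) :
      4 / 3 * ((x - 7/24) ^ 2 * (1 - x) + ((1 - x - 7 / 24) ^ 3 + (7 / 24) ^ 3) / 9)
      = (-40/27) * x ^ 3 + (4/3 * (1 + 7/12 + (3 - 7/8) / 9)) * x ^ 2
        + (4/3 * (-(7/12 + 49/576) + (-3 + 7/4 - 49/192) / 9)) * x
        + 4/3 * (49/576 + (1 - 7/8 + 49/192) / 9) := by
    ring
  simp only [inner_aux, hv, e, f1, f2]
  rw [poly_aux, poly_aux]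
  norm_num
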